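/- Let Γ be a terminal DG game and let (u,c) ∈ E be a move with c ∈ T such that c is the ≻_{i(u)}-worst element of T, and suppose u has at least one other outgoing move (out-degree of u is at least 2). Let Γ' be the DG game obtained from Γ by deleting the single move (u,c). Then every terminal Nash equilibrium of Γ' is also a terminal Nash equilibrium of Γ. -/

import Mathlib

/-!
Since `u` keeps another move, deleting `(u, c)` changes neither the terminals nor the outcome of
any situation. So only a deviation `τ` from the equilibrium `σ` with `τ u = c` is new, and it
belongs to the owner of `u`, because `σ u ≠ c`. If the play of `τ` visits `u`, it ends in `c`, which
is no improvement for that player. Otherwise resetting the choice at `u` to `σ u` leaves the play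
unchanged and turns `τ` into a deviation that was already available after the deletion.
-/

open Classical

/-- A deterministic graphical (DG) game on vertex (position) set `V` with player set `ι`.
`adj` is the move relation of the digraph; terminals are exactly the vertices of
out-degree `0`.  `owner x` is the player controlling position `x` (irrelevant for
terminals), `init` is the initial position, and `pref i x y` means that player `i`
strictly prefers outcome `x` to outcome `y`, where outcomes are encoded as
`Option V`: `some t` for a terminal `t` and `none` for the infinite outcome `∞`. -/
structure DGGame (V : Type*) (ι : Type*) where
  adj : V → V → Prop
  owner : V → ι
  init : V
  pref : ι → Option V → Option V → Prop

namespace DGGame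

variable {V ι : Type*} (Γ : DGGame V ι)

/-- A terminal position: no outgoing moves. -/
def Terminal (x : V) : Prop := ∀ y, ¬ Γ.adj x y

/-- The set of outcomes `A = T ∪ {∞}`. -/
def OutcomeSet : Set (Option V) := {x | x = none ∨ ∃ t, Γ.Terminal t ∧ x = some t}

/-- The preferences of each player form a strict linear order on the outcome set. -/
def PrefOrder : Prop :=
  ∀ i : ι,
    (∀ x ∈ Γ.OutcomeSet, ¬ Γ.pref i x x) ∧
    (∀ x ∈ Γ.OutcomeSet, ∀ y ∈ Γ.OutcomeSet, ∀ z ∈ Γ.OutcomeSet,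
        Γ.pref i x y → Γ.pref i y z → Γ.pref i x z) ∧
    (∀ x ∈ Γ.OutcomeSet, ∀ y ∈ Γ.OutcomeSet, x ≠ y → Γ.pref i x y ∨ Γ.pref i y x)

/-- One step of the play determined by a situation `σ` (stays put at terminals). -/
noncomputable def step (σ : V → V) (x : V) : V :=
  if Γ.Terminal x then x else σ x

/-- The position reached after `n` moves of the play starting at the initial position. -/
noncomputable def iter (σ : V → V) (n : ℕ) : V := (Γ.step σ)^[n] Γ.init

/-- The outcome `g(σ)` of a situation: the terminal at which the play from the initial
position ends, or `none` (i.e. `∞`) if the play is infinite. -/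
noncomputable def outcome (σ : V → V) : Option V :=
  if h : ∃ n, Γ.Terminal (Γ.iter σ n) then some (Γ.iter σ (Nat.find h)) else none

/-- A situation: a choice, for every non-terminal position, of a move from it.
(Values at terminal positions are irrelevant.) -/
def IsSituation (σ : V → V) : Prop := ∀ x, ¬ Γ.Terminal x → Γ.adj x (σ x)

/-- Nash equilibrium in pure stationary strategies: no player `i` can obtain a strictly
better outcome by changing his own moves only. -/
def IsNE (σ : V → V) : Prop :=
  Γ.IsSituation σ ∧
  ∀ (i : ι) (σ' : V → V), Γ.IsSituation σ' →
    (∀ x, Γ.owner x ≠ i → σ' x = σ x) →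
    ¬ Γ.pref i (Γ.outcome σ') (Γ.outcome σ)

/-- A terminal Nash equilibrium: a NE whose outcome is a terminal. -/
def IsTerminalNE (σ : V → V) : Prop := Γ.IsNE σ ∧ ∃ t, Γ.outcome σ = some t

/-- A non-terminal Nash equilibrium: a NE whose outcome is `∞`. -/
def IsNonterminalNE (σ : V → V) : Prop := Γ.IsNE σ ∧ Γ.outcome σ = none

/-- A terminal DG game: every player prefers every terminal outcome to `∞`. -/
def TerminalGame : Prop := ∀ (i : ι) (t : V), Γ.Terminal t → Γ.pref i (some t) none

/-- A play-once DG game: every player controls exactly one position. -/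
def PlayOnce : Prop := ∀ i : ι, {x | ¬ Γ.Terminal x ∧ Γ.owner x = i}.ncard = 1

/-- Reachability by a directed path. -/
def Reaches (x y : V) : Prop := Relation.ReflTransGen Γ.adj x y

end DGGame

namespace DGGame

section Play

variable {V ι : Type*} {Γ : DGGame V ι} {σ τ : V → V} {u : V} {m n : ℕ}

theorem step_of_not_terminal (hu : ¬ Γ.Terminal u) : Γ.step σ u = σ u :=
  if_neg hu

theorem iter_succ (Γ : DGGame V ι) (σ : V → V) (n : ℕ) :
    Γ.iter σ (n + 1) = Γ.step σ (Γ.iter σ n) :=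
  Function.iterate_succ_apply' _ _ _

theorem iter_eq_of_terminal_of_le (hm : Γ.Terminal (Γ.iter σ m)) (hmn : m ≤ n) :
    Γ.iter σ n = Γ.iter σ m := by
  induction n, hmn using Nat.le_induction with
  | base => rfl
  | succ n _ ih => rw [iter_succ, ih, step, if_pos hm]

theorem outcome_eq_some_of_terminal (hn : Γ.Terminal (Γ.iter σ n)) :
    Γ.outcome σ = some (Γ.iter σ n) := by
  have hex : ∃ n, Γ.Terminal (Γ.iter σ n) := ⟨n, hn⟩
  rw [outcome, dif_pos hex, iter_eq_of_terminal_of_le (Nat.find_spec hex) (Nat.find_min' hex hn)]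

theorem terminal_of_outcome_eq_some {t : V} (ht : Γ.outcome σ = some t) : Γ.Terminal t := by
  rw [outcome] at ht
  split_ifs at ht with hex
  exact Option.some.inj ht ▸ Nat.find_spec hex

theorem outcome_eq_some_of_visits (hn : Γ.iter σ n = u) (hu : ¬ Γ.Terminal u)
    (hσu : Γ.Terminal (σ u)) : Γ.outcome σ = some (σ u) := by
  have hsucc : Γ.iter σ (n + 1) = σ u := by rw [iter_succ, hn, step_of_not_terminal hu]
  rw [← hsucc] at hσu ⊢
  exact outcome_eq_some_of_terminal hσu

theorem outcome_congr (h : ∀ n, Γ.iter σ n = Γ.iter τ n) : Γ.outcome σ = Γ.outcome τ := by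
  simp only [outcome, h]

theorem iter_update_of_forall_iter_ne [DecidableEq V] (hu : ∀ n, Γ.iter σ n ≠ u) (y : V) (n : ℕ) :
    Γ.iter (Function.update σ u y) n = Γ.iter σ n := by
  induction n with
  | zero => rfl
  | succ n ih => rw [iter_succ, iter_succ, ih, step, step, Function.update_of_ne (hu n)]

theorem outcome_update_of_forall_iter_ne [DecidableEq V] (hu : ∀ n, Γ.iter σ n ≠ u) (y : V) :
    Γ.outcome (Function.update σ u y) = Γ.outcome σ :=
  outcome_congr (iter_update_of_forall_iter_ne hu y)

end Play

section DeleteMove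

variable {V ι : Type*} {Γ : DGGame V ι} {σ τ : V → V} {u c : V}

/-- The game obtained from `Γ` by deleting the move `(u, c)`; if this is the only move from `u`,
then `u` becomes a terminal. -/
def deleteMove (Γ : DGGame V ι) (u c : V) : DGGame V ι :=
  { Γ with adj := fun x y => Γ.adj x y ∧ ¬ (x = u ∧ y = c) }

theorem terminal_deleteMove_iff (hdeg : ∃ y, y ≠ c ∧ Γ.adj u y) (x : V) :
    (Γ.deleteMove u c).Terminal x ↔ Γ.Terminal x := by
  refine ⟨fun hx y hxy => ?_, fun hx y hxy => hx y hxy.1⟩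
  by_cases hxu : x = u
  · obtain ⟨z, hzc, huz⟩ := hdeg
    exact hx z ⟨hxu ▸ huz, fun h => hzc h.2⟩
  · exact hx y ⟨hxy, fun h => hxu h.1⟩

theorem outcome_deleteMove (hdeg : ∃ y, y ≠ c ∧ Γ.adj u y) (σ : V → V) :
    (Γ.deleteMove u c).outcome σ = Γ.outcome σ := by
  have hiter (n : ℕ) : (Γ.deleteMove u c).iter σ n = Γ.iter σ n := by
    induction n with
    | zero => rfl
    | succ n ih => simp only [iter_succ, ih, step, terminal_deleteMove_iff hdeg]
  simp only [outcome, hiter, terminal_deleteMove_iff hdeg]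

theorem isSituation_deleteMove_iff (hdeg : ∃ y, y ≠ c ∧ Γ.adj u y) :
    (Γ.deleteMove u c).IsSituation σ ↔ Γ.IsSituation σ ∧ σ u ≠ c := by
  have hu : ¬ Γ.Terminal u := fun h => hdeg.elim fun y hy => h y hy.2
  simp only [IsSituation, terminal_deleteMove_iff hdeg]
  exact ⟨fun h => ⟨fun x hx => (h x hx).1, fun hσu => (h u hu).2 ⟨rfl, hσu⟩⟩,
    fun h x hx => ⟨h.1 x hx, fun hxu => h.2 (hxu.1 ▸ hxu.2)⟩⟩

theorem IsSituation.update [DecidableEq V] (hσ : Γ.IsSituation σ) {y : V} (hy : Γ.adj u y) :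
    Γ.IsSituation (Function.update σ u y) := by
  intro x hx
  obtain rfl | hxu := eq_or_ne x u
  · rwa [Function.update_self]
  · rw [Function.update_of_ne hxu]
    exact hσ x hx

theorem IsNE.of_deleteMove (hc : Γ.Terminal c) (hdeg : ∃ y, y ≠ c ∧ Γ.adj u y)
    (hσ : (Γ.deleteMove u c).IsNE σ) (hnot_pref : ¬ Γ.pref (Γ.owner u) (some c) (Γ.outcome σ)) :
    Γ.IsNE σ := by
  have hu : ¬ Γ.Terminal u := fun h => hdeg.elim fun y hy => h y hy.2
  obtain ⟨hsit, hσu⟩ := (isSituation_deleteMove_iff hdeg).1 hσ.1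
  have hdev (i : ι) (τ : V → V) (hτ : Γ.IsSituation τ) (hτu : τ u ≠ c)
      (hτσ : ∀ x, Γ.owner x ≠ i → τ x = σ x) : ¬ Γ.pref i (Γ.outcome τ) (Γ.outcome σ) := by
    rw [← outcome_deleteMove hdeg τ, ← outcome_deleteMove hdeg σ]
    exact hσ.2 i τ ((isSituation_deleteMove_iff hdeg).2 ⟨hτ, hτu⟩) hτσ
  refine ⟨hsit, fun i τ hτ hτσ => ?_⟩
  by_cases hτu : τ u = c
  · obtain rfl : Γ.owner u = i := by_contra fun h => hσu (hτσ u h ▸ hτu)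
    by_cases hvisit : ∃ n, Γ.iter τ n = u
    · obtain ⟨n, hn⟩ := hvisit
      rwa [outcome_eq_some_of_visits hn hu (hτu ▸ hc), hτu]
    · rw [← outcome_update_of_forall_iter_ne (not_exists.1 hvisit) (σ u)]
      refine hdev _ _ (hτ.update (hsit u hu)) (by rwa [Function.update_self]) fun x hx => ?_
      rw [Function.update_of_ne (ne_of_apply_ne Γ.owner hx), hτσ x hx]
  · exact hdev i τ hτ hτu hτσ

end DeleteMove

theorem PrefOrder.not_pref_of_forall_pref {V ι : Type*} {Γ : DGGame V ι} (hpref : Γ.PrefOrder)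
    {i : ι} {b c : V} (hb : Γ.Terminal b) (hc : Γ.Terminal c)
    (hworst : ∀ b, Γ.Terminal b → b ≠ c → Γ.pref i (some b) (some c)) :
    ¬ Γ.pref i (some c) (some b) := by
  obtain ⟨hirrefl, htrans, -⟩ := hpref i
  have hbA : some b ∈ Γ.OutcomeSet := Or.inr ⟨b, hb, rfl⟩
  have hcA : some c ∈ Γ.OutcomeSet := Or.inr ⟨c, hc, rfl⟩
  obtain rfl | hbc := eq_or_ne b c
  · exact hirrefl _ hbA
  · exact fun hcb => hirrefl _ hcA (htrans _ hcA _ hbA _ hcA hcb (hworst b hb hbc))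

end DGGame

theorem stmt9_general {V ι : Type*} (Γ : DGGame V ι) (u c : V) (hct : Γ.Terminal c)
    (hworst : ∀ b, Γ.Terminal b → ¬ Γ.pref (Γ.owner u) (some c) (some b))
    (hdeg2 : ∃ y, y ≠ c ∧ Γ.adj u y) (σ : V → V) (hσ : (Γ.deleteMove u c).IsTerminalNE σ) :
    Γ.IsTerminalNE σ := by
  obtain ⟨hNE, t, ht⟩ := hσ
  rw [DGGame.outcome_deleteMove hdeg2] at ht
  refine ⟨hNE.of_deleteMove hct hdeg2 ?_, t, ht⟩
  rw [ht]
  exact hworst t (DGGame.terminal_of_outcome_eq_some ht)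

/-- Let `Γ` be a terminal DG game and `(u,c) ∈ E` a move with `c` a terminal that is
the `≻_{i(u)}`-worst element of `T`, where `u` has at least one other outgoing move.
Let `Γ'` be obtained from `Γ` by deleting the single move `(u,c)`.  Then every
terminal Nash equilibrium of `Γ'` is also a terminal Nash equilibrium of `Γ`. -/
theorem stmt9 {V ι : Type*} [Finite V] (Γ : DGGame V ι)
    (hinit : ¬ Γ.Terminal Γ.init) (hpref : Γ.PrefOrder)
    (hterm : Γ.TerminalGame)
    (u c : V) (hmove : Γ.adj u c) (hct : Γ.Terminal c)
    (hworst : ∀ b, Γ.Terminal b → b ≠ c → Γ.pref (Γ.owner u) (some b) (some c))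
    (hdeg2 : ∃ y, y ≠ c ∧ Γ.adj u y)
    (Γ' : DGGame V ι)
    (hΓ' : Γ' = { Γ with adj := fun x y => Γ.adj x y ∧ ¬ (x = u ∧ y = c) }) :
    ∀ σ : V → V, Γ'.IsTerminalNE σ → Γ.IsTerminalNE σ := by
  subst hΓ'
  exact stmt9_general Γ u c hct (fun _ hb => hpref.not_pref_of_forall_pref hb hct hworst) hdeg2
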